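/- For every integer d ≥ 2 there exist constants C_d, C'_d > 0 and N such that for all integers n ≥ N and all real m with n ≤ m ≤ n^{(d+1)/2}, there exists a family F of d-element subsets of [n] with |F| ≤ C_d·m such that every transversal of F has size at least n·(1 − C'_d·n^{1/(d−1)}·m^{−1/(d−1)}). -/

import Mathlib

/-!
Put `s = (m / n) ^ (1 / (d - 1))`, cut the ground set into `⌊n / s⌋` blocks of nearly equal size,
and take all `d`-sets contained in a block. Blocks have `O(s)` elements, so there are
`O((n / s) * s ^ d) = O(m)` such sets, while a transversal misses fewer than `d` elements of each
block, hence fewer than `d * n / s` elements in total.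
-/

open Finset

/-- The set `S` is a transversal of the family `F`: it meets every member of `F`. It need
not be contained in the ground set of `F`. -/
def IsTransversal {α : Type*} [DecidableEq α] (F : Finset (Finset α)) (S : Finset α) : Prop :=
  ∀ e ∈ F, (S ∩ e).Nonempty

/-- The union of the complete `d`-uniform hypergraphs on the parts of `P`, encoded as
its set of edges; for a suitable `P` it has few edges but only large transversals. -/
def blockFamily {α : Type*} [DecidableEq α] {V : Finset α} (P : Finpartition V) (d : ℕ) :
    Finset (Finset α) :=
  P.parts.biUnion (powersetCard d)

section BlockFamily

variable {α : Type*} [DecidableEq α] {V : Finset α} {P : Finpartition V} {d : ℕ}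

theorem mem_blockFamily {e : Finset α} :
    e ∈ blockFamily P d ↔ ∃ B ∈ P.parts, e ⊆ B ∧ #e = d := by
  simp only [blockFamily, mem_biUnion, mem_powersetCard]

theorem card_blockFamily_le {t : ℕ} (hP : ∀ B ∈ P.parts, #B ≤ t) :
    #(blockFamily P d) ≤ #P.parts * t.choose d :=
  card_biUnion_le_card_mul _ _ _ fun B hB => by
    simpa only [card_powersetCard] using Nat.choose_le_choose d (hP B hB)

theorem IsTransversal.card_part_sdiff_lt {S B : Finset α} (hS : IsTransversal (blockFamily P d) S)
    (hB : B ∈ P.parts) : #(B \ S) < d := by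
  by_contra! hd
  obtain ⟨e, heB, he⟩ := exists_subset_card_eq hd
  have heS : (S ∩ e).Nonempty := hS e (mem_blockFamily.2 ⟨B, hB, heB.trans sdiff_subset, he⟩)
  exact not_disjoint_iff_nonempty_inter.2 heS (disjoint_sdiff.mono_right heB)

theorem IsTransversal.card_le_card_add_card_parts_mul {S : Finset α}
    (hS : IsTransversal (blockFamily P d) S) : #V ≤ #S + #P.parts * (d - 1) := by
  have hcover : V \ S ⊆ P.parts.biUnion (· \ S) := fun x hx => by
    obtain ⟨hxV, hxS⟩ := mem_sdiff.1 hx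
    obtain ⟨B, hB, hxB⟩ := P.exists_mem hxV
    exact mem_biUnion.2 ⟨B, hB, mem_sdiff.2 ⟨hxB, hxS⟩⟩
  have hmissed : #(V \ S) ≤ #P.parts * (d - 1) := by
    refine (card_le_card hcover).trans (card_biUnion_le_card_mul _ _ _ fun B hB => ?_)
    exact Nat.le_sub_one_of_lt (hS.card_part_sdiff_lt hB)
  calc #V ≤ #(V \ S) + #S := card_le_card_sdiff_add_card
    _ ≤ #S + #P.parts * (d - 1) := by lia

end BlockFamily

section BlockSize

variable {α : Type*} [DecidableEq α] {V : Finset α} {s : ℝ}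

theorem exists_finpartition_card_part_le (hs : 1 ≤ s) (hsV : s ≤ #V) :
    ∃ P : Finpartition V, (#P.parts : ℝ) ≤ #V / s ∧ ∀ B ∈ P.parts, (#B : ℝ) ≤ 3 * s := by
  have hs0 : 0 < s := by linarith
  set k := ⌊#V / s⌋₊
  have hk : (k : ℝ) ≤ #V / s := Nat.floor_le (by positivity)
  have hk1 : 1 ≤ k := Nat.le_floor (by simpa only [Nat.cast_one, one_le_div hs0] using hsV)
  have hkV : k ≤ #V := Nat.floor_le_of_le (div_le_self (by positivity) hs)
  have hVk : (#V : ℝ) / k ≤ 2 * s := by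
    have hlt : #V / s / 2 < k := Nat.div_two_lt_floor ((one_le_div hs0).2 hsV)
    rw [div_div, div_lt_iff₀ (by positivity)] at hlt
    rw [div_le_iff₀ (by exact_mod_cast hk1)]
    linarith
  obtain ⟨P, hP, hPk⟩ := Finpartition.exists_equipartition_card_eq V (by lia : k ≠ 0) hkV
  refine ⟨P, hPk ▸ hk, fun B hB => ?_⟩
  calc (#B : ℝ) ≤ (#V / k : ℕ) + 1 := by exact_mod_cast hPk ▸ hP.card_part_le_average_add_one hB
    _ ≤ #V / k + 1 := by gcongr; exact Nat.cast_div_le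
    _ ≤ 3 * s := by linarith

theorem exists_uniform_family_forall_isTransversal_le_card {d : ℕ} (hd : d ≠ 0) (hs : 0 < s)
    (hsV : s ≤ #V) :
    ∃ F : Finset (Finset α), (∀ e ∈ F, e ⊆ V ∧ #e = d) ∧
      (#F : ℝ) ≤ 3 ^ d * (#V * s ^ (d - 1)) ∧
      ∀ S, IsTransversal F S → #V * (1 - d / s) ≤ (#S : ℝ) := by
  obtain hs1 | hs1 := lt_or_ge s 1
  · refine ⟨∅, by simp, by simp only [card_empty, Nat.cast_zero]; positivity, fun S _ => ?_⟩
    have hd1 : (1 : ℝ) ≤ d := by exact_mod_cast Nat.one_le_iff_ne_zero.2 hd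
    have hds : 1 ≤ d / s := (one_le_div hs).2 (hs1.le.trans hd1)
    exact (mul_nonpos_of_nonneg_of_nonpos (by positivity) (by linarith)).trans (by positivity)
  obtain ⟨P, hparts, hpart⟩ := exists_finpartition_card_part_le hs1 hsV
  refine ⟨blockFamily P d, fun e he => ?_, ?_, fun S hS => ?_⟩
  · obtain ⟨B, hB, heB, hed⟩ := mem_blockFamily.1 he
    exact ⟨heB.trans (P.le hB), hed⟩
  · calc (#(blockFamily P d) : ℝ) ≤ #P.parts * (⌊3 * s⌋₊.choose d : ℕ) := by
          exact_mod_cast card_blockFamily_le fun B hB => Nat.le_floor (hpart B hB)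
      _ ≤ #P.parts * (⌊3 * s⌋₊ : ℝ) ^ d := by gcongr; exact_mod_cast Nat.choose_le_pow _ _
      _ ≤ #V / s * (3 * s) ^ d := by gcongr; exact Nat.floor_le (by positivity)
      _ = 3 ^ d * (#V * s ^ (d - 1)) := by
          rw [mul_pow, ← mul_pow_sub_one hd s]
          field_simp
  · have hVS : (#V : ℝ) ≤ #S + #P.parts * d := by
      exact_mod_cast hS.card_le_card_add_card_parts_mul.trans (by gcongr; lia)
    calc (#V : ℝ) * (1 - d / s) = #V - #V / s * d := by ring
      _ ≤ #V - #P.parts * d := by gcongr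
      _ ≤ #S := by linarith

end BlockSize

theorem stmt_6_general {α : Type*} [DecidableEq α] (V : Finset α) {d : ℕ} (hd : 2 ≤ d) {m : ℝ}
    (hm : 0 < m) (hmV : m ≤ (#V : ℝ) ^ d) :
    ∃ F : Finset (Finset α), (∀ e ∈ F, e ⊆ V ∧ #e = d) ∧ (#F : ℝ) ≤ 3 ^ d * m ∧
      ∀ S, IsTransversal F S →
        (#V : ℝ) * (1 - d * (#V : ℝ) ^ ((1 : ℝ) / ((d : ℝ) - 1)) *
          m ^ (-(1 : ℝ) / ((d : ℝ) - 1))) ≤ #S := by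
  have hd0 : d ≠ 0 := by lia
  have hd1 : d - 1 ≠ 0 := by lia
  have hV : (0 : ℝ) < #V := by
    by_contra! hV
    rw [hV.antisymm (Nat.cast_nonneg _), zero_pow hd0] at hmV
    exact hmV.not_gt hm
  rw [show (d : ℝ) - 1 = (d - 1 : ℕ) by rw [Nat.cast_pred (by lia)]]
  set s : ℝ := (m / #V) ^ ((1 : ℝ) / (d - 1 : ℕ)) with hs
  have hs0 : 0 < s := by positivity
  have hspow : s ^ (d - 1) = m / #V := by
    rw [hs, one_div, Real.rpow_inv_natCast_pow (by positivity) hd1]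
  have hsV : s ≤ #V := by
    rwa [← pow_le_pow_iff_left₀ hs0.le hV.le hd1, hspow, div_le_iff₀ hV, pow_sub_one_mul hd0]
  have hsinv : (#V : ℝ) ^ ((1 : ℝ) / (d - 1 : ℕ)) * m ^ (-(1 : ℝ) / (d - 1 : ℕ)) = s⁻¹ := by
    rw [hs, Real.div_rpow hm.le hV.le, inv_div, neg_div, Real.rpow_neg hm.le, ← div_eq_mul_inv]
  have hm_eq : #V * s ^ (d - 1) = m := by rw [hspow, mul_div_cancel₀ m hV.ne']
  simpa only [mul_assoc (d : ℝ), hsinv, ← div_eq_mul_inv, hm_eq] using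
    exists_uniform_family_forall_isTransversal_le_card hd0 hs0 hsV

theorem stmt_6 (d : ℕ) (hd : 2 ≤ d) :
    ∃ C C' : ℝ, 0 < C ∧ 0 < C' ∧ ∃ N : ℕ, ∀ n : ℕ, N ≤ n → ∀ m : ℝ,
      (n : ℝ) ≤ m → m ≤ (n : ℝ) ^ (((d : ℝ) + 1) / 2) →
      ∃ F : Finset (Finset ℕ),
        (∀ e ∈ F, e ⊆ Finset.Icc 1 n ∧ e.card = d) ∧
        (F.card : ℝ) ≤ C * m ∧
        ∀ S : Finset ℕ, S ⊆ Finset.Icc 1 n → (∀ e ∈ F, (S ∩ e).Nonempty) →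
          (n : ℝ) * (1 - C' * (n : ℝ) ^ ((1 : ℝ) / ((d : ℝ) - 1)) *
            m ^ (-(1 : ℝ) / ((d : ℝ) - 1))) ≤ (S.card : ℝ) := by
  refine ⟨3 ^ d, d, by positivity, by positivity, 1, fun n hn m hnm hm => ?_⟩
  have hn1 : (1 : ℝ) ≤ n := by exact_mod_cast hn
  have hmn : m ≤ (n : ℝ) ^ d := by
    rw [← Real.rpow_natCast]
    have hd2 : (2 : ℝ) ≤ d := by exact_mod_cast hd
    exact hm.trans (Real.rpow_le_rpow_of_exponent_le hn1 (by linarith))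
  have hcard : #(Icc 1 n) = n := by simp
  obtain ⟨F, hF, hFm, hFS⟩ := stmt_6_general (Icc 1 n) hd (by linarith : 0 < m) (by rwa [hcard])
  exact ⟨F, hF, hFm, fun S _ hS => by simpa only [hcard] using hFS S hS⟩
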